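/- Let a budget profile be given (integer m ≥ 1, strictly increasing positive real privacy budgets ε_1 < ε_2 < ⋯ < ε_m, positive integer counts n_1, …, n_m, n = n_1 + ⋯ + n_m, Z = (n − n_m)(n − n_m + 1/4)) with sensitivity I = 1, and let N ≥ 1 be an integer. Then Σ_{k=1}^{N} errO_1(k) ≤ min( (2/ε_1²)·H²_N , N·Z + (2/ε_m²)·H²_N ), where errO_1(k) is the OBS error of the k-scaled profile and H²_N = Σ_{k=1}^{N} 1/k². (This is the bound err^{(s,p)}_NOP on the total error of the α skipped publications together with the publication, with N = α + 1, in the proof of Theorem 3 case α ≤ w_L for Personalized Budget Absorption.) -/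

import Mathlib

open Finset

/-- Sampling probability p_k(θ) = (e^{ε_k} − 1)/(e^{θ} − 1). -/
noncomputable def samplingP {m : ℕ} (ε : Fin m → ℝ) (k : Fin m) (θ : ℝ) : ℝ :=
  (Real.exp (ε k) - 1) / (Real.exp θ - 1)

/-- Sampling error err_s(θ). -/
noncomputable def errS {m : ℕ} (ε : Fin m → ℝ) (nn : Fin m → ℕ) (θ : ℝ) : ℝ :=
  (∑ k, if ε k < θ then (nn k : ℝ) * samplingP ε k θ * (1 - samplingP ε k θ) else 0)
    + (∑ k, if ε k < θ then (nn k : ℝ) * (1 - samplingP ε k θ) else 0) ^ 2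

/-- Noise error err_dp(θ) = 2I²/θ². -/
noncomputable def errDP (I θ : ℝ) : ℝ := 2 * I ^ 2 / θ ^ 2

/-- Total error err(θ) = err_s(θ) + err_dp(θ). -/
noncomputable def errTot {m : ℕ} (ε : Fin m → ℝ) (nn : Fin m → ℕ) (I θ : ℝ) : ℝ :=
  errS ε nn θ + errDP I θ

/-- OBS error: errO_I = min_{1 ≤ j ≤ m} err(ε_j). -/
noncomputable def errO {m : ℕ} (hm : 0 < m) (ε : Fin m → ℝ) (nn : Fin m → ℕ) (I : ℝ) : ℝ :=
  Finset.univ.inf' (Finset.univ_nonempty_iff.mpr (Fin.pos_iff_nonempty.mp hm))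
    (fun j => errTot ε nn I (ε j))

/-- Index of the smallest budget ε_1. -/
def firstIdx {m : ℕ} (hm : 0 < m) : Fin m := ⟨0, hm⟩

/-- Index of the largest budget ε_m. -/
def lastIdx {m : ℕ} (hm : 0 < m) : Fin m := ⟨m - 1, Nat.sub_lt hm Nat.one_pos⟩

/-- Z = (n − n_m)(n − n_m + 1/4). -/
noncomputable def Zval {m : ℕ} (hm : 0 < m) (nn : Fin m → ℕ) : ℝ :=
  ((∑ j, (nn j : ℝ)) - nn (lastIdx hm)) * ((∑ j, (nn j : ℝ)) - nn (lastIdx hm) + 1 / 4)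

/-- N-th square harmonic number H²_N = Σ_{k=1}^N 1/k². -/
noncomputable def sqHarmonic (N : ℕ) : ℝ := ∑ k ∈ Finset.Icc 1 N, 1 / (k : ℝ) ^ 2

/-!
Evaluate the total error at the two extreme budgets of each scaled profile. At the smallest one
nobody is subsampled, so only noise remains. At any budget `ε j` at most `S = n - n_j` people are
subsampled, each with variance `p (1 - p) ≤ 1 / 4` and bias `1 - p ≤ 1`, so the sampling error is at
most `S / 4 + S ^ 2`, a bound that does not see the scale. The noise error scales as `1 / k ^ 2`,
and summing over the slots gives the square harmonic number.
-/

section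

variable {m : ℕ} {ε : Fin m → ℝ}

theorem samplingP_nonneg {k : Fin m} {θ : ℝ} (hk : 0 ≤ ε k) (hθ : 0 ≤ θ) :
    0 ≤ samplingP ε k θ :=
  div_nonneg (sub_nonneg.mpr (Real.one_le_exp hk)) (sub_nonneg.mpr (Real.one_le_exp hθ))

theorem samplingP_le_one {k : Fin m} {θ : ℝ} (hθ : 0 ≤ θ) (hk : ε k ≤ θ) :
    samplingP ε k θ ≤ 1 :=
  div_le_one_of_le₀ (sub_le_sub_right (Real.exp_le_exp.mpr hk) 1)
    (sub_nonneg.mpr (Real.one_le_exp hθ))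

/-- The number of people whose budget is below the threshold `θ`, that is, who are subsampled;
real-valued, since it is only used in error bounds. -/
noncomputable def countBelow (ε : Fin m → ℝ) (nn : Fin m → ℕ) (θ : ℝ) : ℝ :=
  ∑ k with ε k < θ, (nn k : ℝ)

variable (nn : Fin m → ℕ)

theorem countBelow_nonneg (θ : ℝ) : 0 ≤ countBelow ε nn θ :=
  sum_nonneg fun k _ => (nn k).cast_nonneg

theorem countBelow_le_sum_sub (j : Fin m) :
    countBelow ε nn (ε j) ≤ (∑ k, (nn k : ℝ)) - nn j := by
  have hsub : univ.filter (fun k => ε k < ε j) ⊆ univ.erase j := fun k hk =>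
    mem_erase.mpr ⟨fun hkj => (mem_filter.mp hk).2.ne (congrArg ε hkj), mem_univ k⟩
  calc countBelow ε nn (ε j) ≤ ∑ k ∈ univ.erase j, (nn k : ℝ) :=
        sum_le_sum_of_subset_of_nonneg hsub fun k _ _ => (nn k).cast_nonneg
    _ = (∑ k, (nn k : ℝ)) - nn j := sum_erase_eq_sub (mem_univ j)

theorem sum_sampling_variance_le (θ : ℝ) :
    ∑ k with ε k < θ, (nn k : ℝ) * samplingP ε k θ * (1 - samplingP ε k θ) ≤
      countBelow ε nn θ * (1 / 4) := by
  rw [countBelow, sum_mul]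
  refine sum_le_sum fun k _ => ?_
  have hvar : samplingP ε k θ * (1 - samplingP ε k θ) ≤ 1 / 4 := by
    linarith [sq_nonneg (samplingP ε k θ - 1 / 2)]
  rw [mul_assoc]
  exact mul_le_mul_of_nonneg_left hvar (nn k).cast_nonneg

theorem sum_sampling_bias_nonneg {θ : ℝ} (hθ : 0 ≤ θ) :
    0 ≤ ∑ k with ε k < θ, (nn k : ℝ) * (1 - samplingP ε k θ) :=
  sum_nonneg fun k hk => mul_nonneg (nn k).cast_nonneg
    (sub_nonneg.mpr (samplingP_le_one hθ (mem_filter.mp hk).2.le))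

theorem sum_sampling_bias_le (hε : ∀ k, 0 ≤ ε k) {θ : ℝ} (hθ : 0 ≤ θ) :
    ∑ k with ε k < θ, (nn k : ℝ) * (1 - samplingP ε k θ) ≤ countBelow ε nn θ :=
  sum_le_sum fun k _ => mul_le_of_le_one_right (nn k).cast_nonneg
    (sub_le_self 1 (samplingP_nonneg (hε k) hθ))

theorem errS_le_countBelow (hε : ∀ k, 0 ≤ ε k) {θ : ℝ} (hθ : 0 ≤ θ) :
    errS ε nn θ ≤ countBelow ε nn θ * (countBelow ε nn θ + 1 / 4) := by
  simp only [errS, ← sum_filter]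
  calc _ ≤ countBelow ε nn θ * (1 / 4) + countBelow ε nn θ ^ 2 :=
        add_le_add (sum_sampling_variance_le nn θ)
          (pow_le_pow_left₀ (sum_sampling_bias_nonneg nn hθ) (sum_sampling_bias_le nn hε hθ) 2)
    _ = countBelow ε nn θ * (countBelow ε nn θ + 1 / 4) := by ring

theorem errS_le_sum_sub (hε : ∀ k, 0 ≤ ε k) (j : Fin m) :
    errS ε nn (ε j) ≤
      ((∑ k, (nn k : ℝ)) - nn j) * ((∑ k, (nn k : ℝ)) - nn j + 1 / 4) := by
  have hcount := countBelow_le_sum_sub (ε := ε) nn j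
  have hnonneg := countBelow_nonneg (ε := ε) nn (ε j)
  refine (errS_le_countBelow nn hε (hε j)).trans ?_
  exact mul_le_mul hcount (by linarith) (by linarith) (hnonneg.trans hcount)

theorem errS_eq_zero_of_forall_le {θ : ℝ} (hθ : ∀ k, θ ≤ ε k) : errS ε nn θ = 0 := by
  simp [errS, fun k => not_lt.mpr (hθ k)]

theorem errO_le_errTot (hm : 0 < m) (I : ℝ) (j : Fin m) :
    errO hm ε nn I ≤ errTot ε nn I (ε j) :=
  inf'_le _ (mem_univ j)

theorem errO_le_errDP (hm : 0 < m) (I : ℝ) {i : Fin m} (hi : ∀ k, ε i ≤ ε k) :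
    errO hm ε nn I ≤ errDP I (ε i) := by
  simpa only [errTot, errS_eq_zero_of_forall_le nn hi, zero_add] using
    errO_le_errTot (ε := ε) nn hm I i

theorem errO_le_sum_sub_add_errDP (hm : 0 < m) (hε : ∀ k, 0 ≤ ε k) (I : ℝ) (j : Fin m) :
    errO hm ε nn I ≤
      ((∑ k, (nn k : ℝ)) - nn j) * ((∑ k, (nn k : ℝ)) - nn j + 1 / 4) + errDP I (ε j) :=
  (errO_le_errTot nn hm I j).trans (add_le_add_left (errS_le_sum_sub nn hε j) _)

theorem errDP_mul (I c θ : ℝ) : errDP I (c * θ) = errDP I θ * (1 / c ^ 2) := by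
  rw [errDP, errDP, mul_pow, div_mul_div_comm, mul_one, mul_comm (c ^ 2)]

theorem sum_errDP_mul (I θ : ℝ) (N : ℕ) :
    ∑ k ∈ Icc 1 N, errDP I (k * θ) = errDP I θ * sqHarmonic N := by
  simp only [errDP_mul, sqHarmonic, mul_sum]

theorem pba_skipped_obs_error_bound_general (hm : 0 < m) (hpos : ∀ k, 0 < ε k)
    {i : Fin m} (hi : ∀ k, ε i ≤ ε k) (j : Fin m) (I : ℝ) (N : ℕ) :
    ∑ k ∈ Icc 1 N, errO hm (fun l => (k : ℝ) * ε l) nn I ≤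
      min (errDP I (ε i) * sqHarmonic N)
        (N * (((∑ l, (nn l : ℝ)) - nn j) * ((∑ l, (nn l : ℝ)) - nn j + 1 / 4)) +
          errDP I (ε j) * sqHarmonic N) := by
  refine le_min ?_ ?_
  · rw [← sum_errDP_mul]
    exact sum_le_sum fun k _ => errO_le_errDP nn hm I fun l =>
      mul_le_mul_of_nonneg_left (hi l) k.cast_nonneg
  · calc _ ≤ ∑ k ∈ Icc 1 N, (((∑ l, (nn l : ℝ)) - nn j) *
            ((∑ l, (nn l : ℝ)) - nn j + 1 / 4) + errDP I (k * ε j)) :=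
          sum_le_sum fun k _ => errO_le_sum_sub_add_errDP nn hm
            (fun l => mul_nonneg k.cast_nonneg (hpos l).le) I j
      _ = _ := by
          rw [sum_add_distrib, sum_errDP_mul, sum_const, Nat.card_Icc, Nat.add_sub_cancel,
            nsmul_eq_mul]

end

/-- Bound on the total error of the α skipped publications together with the
publication (N = α + 1) in the proof of Theorem 3, case α ≤ w_L, for Personalized
Budget Absorption. -/
theorem pba_skipped_obs_error_bound (m : ℕ) (hm : 0 < m) (ε : Fin m → ℝ) (nn : Fin m → ℕ)
    (hpos : ∀ j, 0 < ε j) (hmono : StrictMono ε) (hcount : ∀ j, 0 < nn j)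
    (N : ℕ) (hN : 1 ≤ N) :
    ∑ k ∈ Finset.Icc 1 N, errO hm (fun j => (k : ℝ) * ε j) nn 1 ≤
      min ((2 / (ε (firstIdx hm)) ^ 2) * sqHarmonic N)
        ((N : ℝ) * Zval hm nn + (2 / (ε (lastIdx hm)) ^ 2) * sqHarmonic N) := by
  have hfirst : ∀ k, ε (firstIdx hm) ≤ ε k := fun k => hmono.monotone (Nat.zero_le k.val)
  simpa only [errDP, Zval, one_pow, mul_one] using
    pba_skipped_obs_error_bound_general nn hm hpos hfirst (lastIdx hm) 1 N
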